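/- In the Nehari setting, let Ψ = Φ ∘ m on the unit sphere S, where m(w) = s_w w. (i) If {w_n} ⊂ S is a Palais–Smale sequence for Ψ (i.e. {Ψ(w_n)} is bounded and ‖Ψ'(w_n)‖ → 0, where ‖Ψ'(w)‖ = sup{|Ψ'(w)z| : z ∈ T_wS, ‖z‖ = 1}), then {m(w_n)} is a Palais–Smale sequence for Φ ({Φ(m(w_n))} is bounded and ‖Φ'(m(w_n))‖ → 0 in the dual norm). (ii) If {u_n} ⊂ N is a bounded Palais–Smale sequence for Φ, then {u_n/‖u_n‖} is a Palais–Smale sequence for Ψ. -/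

import Mathlib

open scoped ENNReal

noncomputable section

/-- `H¹(V)`: as a set, the ℓ²-summable real functions on the vertex set;
the `H¹` norm is equivalent to the ℓ² norm by the uniform degree bound. -/
abbrev H1 (Vtx : Type*) := lp (fun _ : Vtx => ℝ) 2

variable {Vtx : Type*}

/-- `Γ(u,v)(x) = (1/2) Σ_{y∼x} (u(y)-u(x))(v(y)-v(x))`. -/
def gammaProd (adj : Vtx → Vtx → Prop) (u v : Vtx → ℝ) (x : Vtx) : ℝ :=
  (1/2) * ∑' y : {y : Vtx // adj x y}, (u y.1 - u x) * (v y.1 - v x)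

/-- `|∇u|²(x) = (1/2) Σ_{y∼x} (u(y)-u(x))²`. -/
def gradSq (adj : Vtx → Vtx → Prop) (u : Vtx → ℝ) (x : Vtx) : ℝ :=
  gammaProd adj u u x

/-- `Δu(x) = Σ_{y∼x} (u(y)-u(x))`. -/
def graphLap (adj : Vtx → Vtx → Prop) (u : Vtx → ℝ) (x : Vtx) : ℝ :=
  ∑' y : {y : Vtx // adj x y}, (u y.1 - u x)

/-- the norm `‖u‖` induced by the potential `V`:
`‖u‖² = Σ_x (|∇u|²(x) + V(x)u(x)²)`. -/
def nrmV (adj : Vtx → Vtx → Prop) (Vp : Vtx → ℝ) (u : Vtx → ℝ) : ℝ :=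
  Real.sqrt (∑' x, (gradSq adj u x + Vp x * (u x)^2))

/-- the `V`-norm of an element of `H¹`. -/
def nrmH (adj : Vtx → Vtx → Prop) (Vp : Vtx → ℝ) (u : H1 Vtx) : ℝ :=
  nrmV adj Vp (fun y => u y)

/-- `⟨u,v⟩ = Σ_x (Γ(u,v)(x) + V(x)u(x)v(x))`. -/
def iprodH (adj : Vtx → Vtx → Prop) (Vp : Vtx → ℝ) (u v : H1 Vtx) : ℝ :=
  ∑' x, (gammaProd adj (fun y => u y) (fun y => v y) x + Vp x * u x * v x)

/-- the variational functional `Φ(u) = ½‖u‖² − Σ_x F(x,u(x))`. -/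
def PhiF (adj : Vtx → Vtx → Prop) (Vp : Vtx → ℝ) (F : Vtx → ℝ → ℝ) (u : H1 Vtx) : ℝ :=
  (1/2) * ∑' x, (gradSq adj (fun y => u y) x + Vp x * (u x)^2) - ∑' x, F x (u x)

/-- the Nehari manifold `N = {u ∈ H¹\{0} : Φ'(u)u = 0}`. -/
def Nehari (adj : Vtx → Vtx → Prop) (Vp : Vtx → ℝ) (F : Vtx → ℝ → ℝ) : Set (H1 Vtx) :=
  {u | u ≠ 0 ∧ fderiv ℝ (PhiF adj Vp F) u u = 0}

/-- adjacency of the lattice graph `ℤ^N`. -/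
def adjZ (N : ℕ) (x y : Fin N → ℤ) : Prop := (∑ i, (x i - y i).natAbs) = 1

end

/-!
The `V`-norm is pulled back from a Hilbert space along the bounded operator `u ↦ (∇u, √V u)`, so
`Φ` is half of a squared Hilbert norm minus `∑ F(·, u)`, and it is `C¹` because the superposition
operator `u ↦ f(·, u)` is continuous on `ℓ²`. The monotonicity of `f(x, u)/|u|` makes `m(w) = s_w w`
the maximum of `Φ` on the ray through `w`. Although `s_w` is only continuous in `w`, this
maximality yields `Ψ'(w) = s_w Φ'(m(w))`. As `Φ'(m(w))` annihilates `w`, its size is already seen on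
tangent directions. The factor `s_w = ‖m(w)‖` is harmless in (i) because `f(x, u) = o(u)` keeps the
Nehari manifold away from the origin, and in (ii) because the sequence is bounded.
-/

open Filter Topology Asymptotics

open scoped Finset RealInnerProductSpace

section NehariScale

variable {E : Type*} [NormedAddCommGroup E] [NormedSpace ℝ E]

/-- The monotonicity condition behind the Nehari method, for a functional `Φ`: along every ray,
the slope `s ↦ Φ'(s w) w` divided by `s` is nonincreasing. -/
def FiberSlopeAntitone (Φ : E → ℝ) : Prop :=
  ∀ w : E, AntitoneOn (fun s : ℝ => fderiv ℝ Φ (s • w) w / s) (Set.Ioi 0)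

/-- `sw` is the Nehari scaling `w ↦ s_w` of `Φ`: the positive multiples of `w ≠ 0` contain
exactly one zero of `u ↦ Φ'(u) u`, namely `s_w w`. The value `sw 0` is unconstrained. -/
def IsNehariScale (Φ : E → ℝ) (sw : E → ℝ) : Prop :=
  ∀ w : E, w ≠ 0 → 0 < sw w ∧ fderiv ℝ Φ (sw w • w) (sw w • w) = 0 ∧
    ∀ s : ℝ, 0 < s → fderiv ℝ Φ (s • w) (s • w) = 0 → s = sw w

variable {Φ sw : E → ℝ} {w : E} {s : ℝ}

theorem hasDerivAt_ray (hΦ : Differentiable ℝ Φ) (w : E) (s : ℝ) :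
    HasDerivAt (fun t : ℝ => Φ (t • w)) (fderiv ℝ Φ (s • w) w) s := by
  have hray : HasDerivAt (fun t : ℝ => t • w) w s := by
    simpa only [one_smul] using (hasDerivAt_id' s).smul_const w
  exact (hΦ (s • w)).hasFDerivAt.comp_hasDerivAt s hray

theorem isLittleO_apply_smul_sub_apply_smul {Φ' : E →L[ℝ] ℝ} {c : E → ℝ} {c₀ : ℝ}
    (hΦ : HasStrictFDerivAt Φ Φ' (c₀ • w)) (hc : Tendsto c (𝓝 w) (𝓝 c₀)) :
    (fun v => Φ (c v • v) - Φ (c v • w) - c₀ * Φ' (v - w)) =o[𝓝 w] fun v => v - w := by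
  have hbase : Tendsto (fun v => (c v • v, c v • w)) (𝓝 w) (𝓝 (c₀ • w, c₀ • w)) :=
    (hc.smul tendsto_id).prodMk_nhds (hc.smul tendsto_const_nhds)
  have hstrict : (fun v => Φ (c v • v) - Φ (c v • w) - Φ' (c v • v - c v • w)) =o[𝓝 w]
      fun v => v - w := by
    refine (hΦ.isLittleO.comp_tendsto hbase).trans_isBigO ?_
    simpa only [Function.comp_def, ← smul_sub, one_smul] using
      (hc.isBigO_one ℝ).smul (isBigO_refl (fun v => v - w) (𝓝 w))
  have hscale : (fun v => (c v - c₀) * Φ' (v - w)) =o[𝓝 w] fun v => v - w := by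
    have hc₀ : (fun v => c v - c₀) =o[𝓝 w] fun _ => (1 : ℝ) :=
      (isLittleO_one_iff ℝ).2 (tendsto_sub_nhds_zero_iff.2 hc)
    simpa only [smul_eq_mul, one_smul] using hc₀.smul_isBigO (Φ'.isBigO_sub (𝓝 w) w)
  refine (hstrict.add hscale).congr_left fun v => ?_
  rw [← smul_sub, map_smul, smul_eq_mul]
  ring

namespace IsNehariScale

theorem pos (hsw : IsNehariScale Φ sw) (hw : w ≠ 0) : 0 < sw w :=
  (hsw w hw).1

theorem fderiv_apply_eq_zero_iff (hsw : IsNehariScale Φ sw) (hw : w ≠ 0) (hs : 0 < s) :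
    fderiv ℝ Φ (s • w) w = 0 ↔ s = sw w := by
  have hself (t : ℝ) (ht : 0 < t) :
      fderiv ℝ Φ (t • w) (t • w) = 0 ↔ fderiv ℝ Φ (t • w) w = 0 := by
    rw [map_smul, smul_eq_mul, mul_eq_zero_iff_left ht.ne']
  refine ⟨fun h => (hsw w hw).2.2 s hs ((hself s hs).2 h), ?_⟩
  rintro rfl
  exact (hself _ hs).1 (hsw w hw).2.1

theorem fderiv_apply_self (hsw : IsNehariScale Φ sw) (hw : w ≠ 0) :
    fderiv ℝ Φ (sw w • w) w = 0 :=
  (hsw.fderiv_apply_eq_zero_iff hw (hsw.pos hw)).2 rfl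

theorem fderiv_apply_pos_iff (hsw : IsNehariScale Φ sw) (hanti : FiberSlopeAntitone Φ)
    (hw : w ≠ 0) (hs : 0 < s) : 0 < fderiv ℝ Φ (s • w) w ↔ s < sw w := by
  have hsw₀ := hsw.pos hw
  have hzero := hsw.fderiv_apply_self hw
  refine ⟨fun hpos => lt_of_not_ge fun hle => ?_, fun hlt => ?_⟩
  · have hslope := hanti w hsw₀ hs hle
    simp only [hzero, zero_div] at hslope
    exact (div_pos hpos hs).not_ge hslope
  · have hslope := hanti w hs hsw₀ hlt.le
    simp only [hzero, zero_div] at hslope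
    have hne : fderiv ℝ Φ (s • w) w ≠ 0 :=
      fun h => hlt.ne ((hsw.fderiv_apply_eq_zero_iff hw hs).1 h)
    exact lt_of_le_of_ne (by simpa using (le_div_iff₀ hs).1 hslope) hne.symm

theorem fderiv_apply_neg_iff (hsw : IsNehariScale Φ sw) (hanti : FiberSlopeAntitone Φ)
    (hw : w ≠ 0) (hs : 0 < s) : fderiv ℝ Φ (s • w) w < 0 ↔ sw w < s := by
  rw [← not_iff_not, not_lt, not_lt, le_iff_lt_or_eq, le_iff_lt_or_eq,
    hsw.fderiv_apply_pos_iff hanti hw hs, eq_comm, hsw.fderiv_apply_eq_zero_iff hw hs]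

theorem apply_smul_le (hsw : IsNehariScale Φ sw) (hanti : FiberSlopeAntitone Φ)
    (hΦ : Differentiable ℝ Φ) (hw : w ≠ 0) (hs : 0 ≤ s) : Φ (s • w) ≤ Φ (sw w • w) := by
  have hderiv := hasDerivAt_ray hΦ w
  have hcont : Continuous fun t : ℝ => Φ (t • w) :=
    continuous_iff_continuousAt.2 fun t => (hderiv t).continuousAt
  rcases le_total s (sw w) with hle | hge
  · have hmono : MonotoneOn (fun t : ℝ => Φ (t • w)) (Set.Icc 0 (sw w)) := by
      refine monotoneOn_of_hasDerivWithinAt_nonneg (convex_Icc _ _) hcont.continuousOn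
        (fun t _ => (hderiv t).hasDerivWithinAt) fun t ht => ?_
      rw [interior_Icc] at ht
      exact ((hsw.fderiv_apply_pos_iff hanti hw ht.1).2 ht.2).le
    exact hmono ⟨hs, hle⟩ ⟨hs.trans hle, le_rfl⟩ hle
  · have hmono : AntitoneOn (fun t : ℝ => Φ (t • w)) (Set.Ici (sw w)) := by
      refine antitoneOn_of_hasDerivWithinAt_nonpos (convex_Ici _) hcont.continuousOn
        (fun t _ => (hderiv t).hasDerivWithinAt) fun t ht => ?_
      rw [interior_Ici] at ht
      exact ((hsw.fderiv_apply_neg_iff hanti hw ((hsw.pos hw).trans ht)).2 ht).le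
    exact hmono Set.self_mem_Ici hge hge

theorem continuousAt (hsw : IsNehariScale Φ sw) (hanti : FiberSlopeAntitone Φ)
    (hΦ : ContDiff ℝ 1 Φ) (hw : w ≠ 0) : ContinuousAt sw w := by
  have hslope (s : ℝ) : ContinuousAt (fun v => fderiv ℝ Φ (s • v) v) w :=
    (((hΦ.continuous_fderiv one_ne_zero).comp (continuous_const_smul s)).clm_apply
      continuous_id).continuousAt
  have hne : ∀ᶠ v in 𝓝 w, v ≠ 0 := eventually_ne_nhds hw
  refine tendsto_order.2 ⟨fun s hs => ?_, fun s hs => ?_⟩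
  · rcases le_or_gt s 0 with hs₀ | hs₀
    · filter_upwards [hne] with v hv using hs₀.trans_lt (hsw.pos hv)
    · have hpos := (hsw.fderiv_apply_pos_iff hanti hw hs₀).2 hs
      filter_upwards [hne, (hslope s).eventually_const_lt hpos] with v hv hslope_pos
      exact (hsw.fderiv_apply_pos_iff hanti hv hs₀).1 hslope_pos
  · have hs₀ := (hsw.pos hw).trans hs
    have hneg := (hsw.fderiv_apply_neg_iff hanti hw hs₀).2 hs
    filter_upwards [hne, (hslope s).eventually_lt_const hneg] with v hv hslope_neg
    exact (hsw.fderiv_apply_neg_iff hanti hv hs₀).1 hslope_neg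

/- `sw` need not be differentiable: maximality of `Φ` at `sw v • v` on each ray squeezes the
increment of `v ↦ Φ (sw v • v)` between two increments of `Φ` with the same linear part. -/
theorem hasFDerivAt_comp_smul (hsw : IsNehariScale Φ sw) (hanti : FiberSlopeAntitone Φ)
    (hΦ : ContDiff ℝ 1 Φ) (hw : w ≠ 0) :
    HasFDerivAt (fun v => Φ (sw v • v)) (sw w • fderiv ℝ Φ (sw w • w)) w := by
  have hdiff : Differentiable ℝ Φ := hΦ.differentiable one_ne_zero
  have hstrict : HasStrictFDerivAt Φ (fderiv ℝ Φ (sw w • w)) (sw w • w) :=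
    hΦ.contDiffAt.hasStrictFDerivAt one_ne_zero
  have hlower := isLittleO_apply_smul_sub_apply_smul hstrict tendsto_const_nhds
  have hupper :=
    isLittleO_apply_smul_sub_apply_smul hstrict (hsw.continuousAt hanti hΦ hw)
  refine .of_isLittleO <| (IsBigO.of_bound 1 ?_).trans_isLittleO
    (hlower.abs_left.add hupper.abs_left)
  filter_upwards [eventually_ne_nhds hw] with v hv
  have hv_max := hsw.apply_smul_le hanti hdiff hv (hsw.pos hw).le
  have hw_max := hsw.apply_smul_le hanti hdiff hw (hsw.pos hv).le
  simp only [FunLike.coe_smul, Pi.smul_apply, smul_eq_mul, Real.norm_eq_abs, one_mul]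
  refine le_trans ?_ (le_abs_self _)
  refine (abs_le_max_abs_abs ?_ ?_).trans
    (max_le_add_of_nonneg (abs_nonneg _) (abs_nonneg _)) <;> linarith

theorem inv_smul_eq (hsw : IsNehariScale Φ sw) {u : E} (hu : u ≠ 0)
    (hΦu : fderiv ℝ Φ u u = 0) {r : ℝ} (hr : 0 < r) : sw (r⁻¹ • u) = r := by
  refine ((hsw _ (smul_ne_zero (inv_ne_zero hr.ne') hu)).2.2 r hr ?_).symm
  rwa [smul_inv_smul₀ hr.ne']

theorem smul_inv_smul_eq (hsw : IsNehariScale Φ sw) {u : E} (hu : u ≠ 0)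
    (hΦu : fderiv ℝ Φ u u = 0) {r : ℝ} (hr : 0 < r) : sw (r⁻¹ • u) • r⁻¹ • u = u := by
  rw [hsw.inv_smul_eq hu hΦu hr, smul_inv_smul₀ hr.ne']

theorem fderiv_comp_smul_inv_smul (hsw : IsNehariScale Φ sw) (hanti : FiberSlopeAntitone Φ)
    (hΦ : ContDiff ℝ 1 Φ) {u : E} (hu : u ≠ 0) (hΦu : fderiv ℝ Φ u u = 0) {r : ℝ} (hr : 0 < r) :
    fderiv ℝ (fun v => Φ (sw v • v)) (r⁻¹ • u) = r • fderiv ℝ Φ u := by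
  rw [(hsw.hasFDerivAt_comp_smul hanti hΦ (smul_ne_zero (inv_ne_zero hr.ne') hu)).fderiv,
    hsw.smul_inv_smul_eq hu hΦu hr, hsw.inv_smul_eq hu hΦu hr]

end IsNehariScale

end NehariScale

theorem abs_apply_le_of_forall_inner_eq_zero {M H : Type*} [AddCommGroup M] [Module ℝ M]
    [NormedAddCommGroup H] [InnerProductSpace ℝ H] {T : M →ₗ[ℝ] H} {L : M →ₗ[ℝ] ℝ} {w : M}
    (hTw : ‖T w‖ = 1) (hLw : L w = 0) {c : ℝ} (hc : 0 ≤ c)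
    (hL : ∀ z, ⟪T w, T z⟫ = 0 → |L z| ≤ c * ‖T z‖) (z : M) :
    |L z| ≤ c * ‖T z‖ := by
  set t := ⟪T w, T z⟫
  have horth : ⟪T w, T (z - t • w)⟫ = 0 := by
    rw [map_sub, map_smul, inner_sub_right, real_inner_smul_right, real_inner_self_eq_norm_sq,
      hTw, one_pow, mul_one, sub_self]
  have hproj : ‖T (z - t • w)‖ ≤ ‖T z‖ := by
    have hpyth := norm_add_sq_eq_norm_sq_add_norm_sq_real
      (real_inner_smul_left (T w) (T (z - t • w)) t |>.trans (by rw [horth, mul_zero]))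
    rw [map_sub, map_smul, add_sub_cancel] at hpyth
    rw [map_sub, map_smul]
    nlinarith [norm_nonneg (T z), mul_self_nonneg ‖t • T w‖]
  calc |L z| = |L (z - t • w)| := by rw [map_sub, map_smul, hLw, smul_zero, sub_zero]
    _ ≤ c * ‖T (z - t • w)‖ := hL _ horth
    _ ≤ c * ‖T z‖ := by gcongr

section PalaisSmale

variable {E H : Type*} [NormedAddCommGroup E] [NormedSpace ℝ E] [NormedAddCommGroup H]
  [InnerProductSpace ℝ H] {Φ sw : E → ℝ} {T : E →ₗ[ℝ] H}

/-- `u` is a Palais–Smale sequence for `Φ`: `Φ(u n)` is bounded and `Φ'(u n)` tends to zero in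
the dual of the norm `N`. -/
def IsPalaisSmale (Φ : E → ℝ) (N : E → ℝ) (u : ℕ → E) : Prop :=
  (∃ C : ℝ, ∀ n, |Φ (u n)| ≤ C) ∧
    ∀ ε > 0, ∃ n₀ : ℕ, ∀ n ≥ n₀, ∀ z, |fderiv ℝ Φ (u n) z| ≤ ε * N z

/-- `w` is a Palais–Smale sequence for the restriction of `Ψ` to the unit sphere of the inner
product `B` with norm `N`: only the tangent directions `z`, those with `B (w n) z = 0`, are
tested. The points `w n` themselves are not required to be unit vectors. -/
def IsTangentialPalaisSmale (Ψ : E → ℝ) (B : E → E → ℝ) (N : E → ℝ) (w : ℕ → E) : Prop :=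
  (∃ C : ℝ, ∀ n, |Ψ (w n)| ≤ C) ∧
    ∀ ε > 0, ∃ n₀ : ℕ, ∀ n ≥ n₀, ∀ z, B (w n) z = 0 → |fderiv ℝ Ψ (w n) z| ≤ ε * N z

namespace IsNehariScale

theorem isPalaisSmale_smul (hsw : IsNehariScale Φ sw) (hanti : FiberSlopeAntitone Φ)
    (hΦ : ContDiff ℝ 1 Φ) {σ : ℝ} (hσ : 0 < σ)
    (hlow : ∀ u, u ≠ 0 → fderiv ℝ Φ u u = 0 → σ ≤ ‖T u‖) {w : ℕ → E} (hTw : ∀ n, ‖T (w n)‖ = 1)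
    (hPS : IsTangentialPalaisSmale (fun v => Φ (sw v • v)) (fun u v => ⟪T u, T v⟫)
      (fun u => ‖T u‖) w) :
    IsPalaisSmale Φ (fun u => ‖T u‖) fun n => sw (w n) • w n := by
  refine ⟨hPS.1, fun ε hε => ?_⟩
  obtain ⟨n₀, hn₀⟩ := hPS.2 (ε * σ) (by positivity)
  refine ⟨n₀, fun n hn => ?_⟩
  have hw : w n ≠ 0 := fun h => by simpa [h] using hTw n
  have hpos := hsw.pos hw
  have hσ_le : σ ≤ sw (w n) := by
    have hnorm := hlow _ (smul_ne_zero hpos.ne' hw) (hsw _ hw).2.1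
    rwa [map_smul, norm_smul, hTw, mul_one, Real.norm_of_nonneg hpos.le] at hnorm
  refine abs_apply_le_of_forall_inner_eq_zero (L := (fderiv ℝ Φ (sw (w n) • w n)).toLinearMap)
    (hTw n) (hsw.fderiv_apply_self hw) hε.le fun z hz => le_of_mul_le_mul_left ?_ hpos
  calc sw (w n) * |fderiv ℝ Φ (sw (w n) • w n) z|
      = |fderiv ℝ (fun v => Φ (sw v • v)) (w n) z| := by
        rw [(hsw.hasFDerivAt_comp_smul hanti hΦ hw).fderiv, FunLike.coe_smul, Pi.smul_apply,
          smul_eq_mul, abs_mul, abs_of_pos hpos]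
    _ ≤ ε * σ * ‖T z‖ := hn₀ n hn z hz
    _ ≤ ε * sw (w n) * ‖T z‖ := by gcongr
    _ = sw (w n) * (ε * ‖T z‖) := by ring

theorem isTangentialPalaisSmale_inv_smul (hsw : IsNehariScale Φ sw)
    (hanti : FiberSlopeAntitone Φ) (hΦ : ContDiff ℝ 1 Φ) {u : ℕ → E} (hu : ∀ n, u n ≠ 0)
    (hΦu : ∀ n, fderiv ℝ Φ (u n) (u n) = 0) {r : ℕ → ℝ} (hr : ∀ n, 0 < r n) {C : ℝ}
    (hrC : ∀ n, r n ≤ C) {N : E → ℝ} (hPS : IsPalaisSmale Φ N u) (B : E → E → ℝ) :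
    IsTangentialPalaisSmale (fun v => Φ (sw v • v)) B N fun n => (r n)⁻¹ • u n := by
  refine ⟨?_, fun ε hε => ?_⟩
  · simpa only [hsw.smul_inv_smul_eq (hu _) (hΦu _) (hr _)] using hPS.1
  have hC : 0 < C := (hr 0).trans_le (hrC 0)
  obtain ⟨n₀, hn₀⟩ := hPS.2 (ε / C) (by positivity)
  refine ⟨n₀, fun n hn z _ => ?_⟩
  calc |fderiv ℝ (fun v => Φ (sw v • v)) ((r n)⁻¹ • u n) z|
      = r n * |fderiv ℝ Φ (u n) z| := by
        rw [hsw.fderiv_comp_smul_inv_smul hanti hΦ (hu n) (hΦu n) (hr n), FunLike.coe_smul,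
          Pi.smul_apply, smul_eq_mul, abs_mul, abs_of_pos (hr n)]
    _ ≤ C * (ε / C * N z) := by
        gcongr
        exacts [hrC n, hn₀ n hn z]
    _ = ε * N z := by field_simp

end IsNehariScale

end PalaisSmale

section Nemytskii

variable {α : Type*} {f F : α → ℝ → ℝ}

theorem H1.abs_apply_le_norm (u : H1 α) (x : α) : |u x| ≤ ‖u‖ :=
  lp.norm_apply_le_norm two_ne_zero u x

theorem H1.hasSum_mul (u v : H1 α) : HasSum (fun x => u x * v x) ⟪u, v⟫ := by
  simpa only [Real.inner_apply] using lp.hasSum_inner (𝕜 := ℝ) u v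

theorem H1.hasSum_sq (u : H1 α) : HasSum (fun x => u x ^ 2) (‖u‖ ^ 2) := by
  simpa only [real_inner_self_eq_norm_sq, ← sq] using H1.hasSum_mul u u

theorem H1.continuous_apply (x : α) : Continuous fun u : H1 α => u x :=
  (lp.lipschitzWith_one_eval 2 x).continuous

/-- `f` grows at most linearly on bounded sets of values, uniformly in the index: the condition
under which `u ↦ f(·, u(·))` acts on `ℓ²`. -/
def HasLocalLinearGrowth (f : α → ℝ → ℝ) : Prop :=
  ∀ R : ℝ, ∃ K ≥ 0, ∀ x t, |t| ≤ R → |f x t| ≤ K * |t|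

theorem hasLocalLinearGrowth_of_abs_le {a q : ℝ} (ha : 0 ≤ a) (hq : 2 ≤ q)
    (hf : ∀ x t, |f x t| ≤ a * (|t| + |t| ^ (q - 1))) : HasLocalLinearGrowth f := by
  refine fun R => ⟨a * (1 + |R| ^ (q - 2)), by positivity, fun x t ht => (hf x t).trans ?_⟩
  have htR : |t| ≤ |R| := ht.trans (le_abs_self R)
  have hpow : |t| ^ (q - 1) = |t| ^ (q - 2) * |t| := by
    rw [← Real.rpow_add_one' (abs_nonneg t) (by linarith)]
    ring_nf
  calc a * (|t| + |t| ^ (q - 1)) = a * (1 + |t| ^ (q - 2)) * |t| := by rw [hpow]; ring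
    _ ≤ a * (1 + |R| ^ (q - 2)) * |t| := by
      gcongr

theorem HasLocalLinearGrowth.memℓp (hf : HasLocalLinearGrowth f) (u : H1 α) :
    Memℓp (fun x => f x (u x)) 2 := by
  obtain ⟨K, -, hK⟩ := hf ‖u‖
  refine ((lp.memℓp u).norm.const_mul K).mono fun x => ?_
  exact hK x (u x) (H1.abs_apply_le_norm u x)

/-- The Nemytskii (superposition) operator `u ↦ f(·, u(·))` on `ℓ²`. -/
noncomputable def nemytskii (f : α → ℝ → ℝ) (hf : HasLocalLinearGrowth f) (u : H1 α) : H1 α :=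
  ⟨fun x => f x (u x), hf.memℓp u⟩

theorem sq_sub_sub_le_of_abs_le {g : ℝ → ℝ} {K s t : ℝ} (hK : 0 ≤ K) (hs : |g s| ≤ K * |s|)
    (ht : |g t| ≤ K * |t|) : (g s - g t) ^ 2 - 2 * K ^ 2 * (s - t) ^ 2 ≤ 8 * K ^ 2 * t ^ 2 := by
  have hbound : |g s - g t| ≤ K * |s - t| + 2 * (K * |t|) := by
    have hst : K * |s| ≤ K * (|s - t| + |t|) := by
      gcongr
      simpa using abs_add_le (s - t) t
    linarith [abs_sub (g s) (g t)]
  have hsq : (g s - g t) ^ 2 ≤ (K * |s - t| + 2 * (K * |t|)) ^ 2 := by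
    rw [← sq_abs (g s - g t)]
    gcongr
  nlinarith [sq_nonneg (K * |s - t| - 2 * (K * |t|)), sq_abs (s - t), sq_abs t]

/- Subtracting from `(f(v) - f(u))²` the multiple of `(v - u)²` that absorbs the growth of `f`
leaves an excess dominated by `u²` alone, so dominated convergence applies although the
convergence of `v` to `u` is only in norm. -/
theorem continuous_nemytskii (hf : HasLocalLinearGrowth f) (hcont : ∀ x, Continuous (f x)) :
    Continuous (nemytskii f hf) := by
  refine continuous_iff_continuousAt.2 fun u => ?_
  obtain ⟨K, hK₀, hK⟩ := hf (‖u‖ + 1)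
  let excess (v : H1 α) (x : α) : ℝ :=
    max ((f x (v x) - f x (u x)) ^ 2 - 2 * K ^ 2 * (v x - u x) ^ 2) 0
  have hbound : ∀ᶠ v in 𝓝 u, ∀ x, ‖excess v x‖ ≤ 8 * K ^ 2 * u x ^ 2 := by
    filter_upwards [continuous_norm.continuousAt.eventually_lt_const (lt_add_one ‖u‖)] with v hv x
    rw [Real.norm_of_nonneg (le_max_right _ _)]
    exact max_le (sq_sub_sub_le_of_abs_le hK₀
      (hK x (v x) ((H1.abs_apply_le_norm v x).trans hv.le))
      (hK x (u x) ((H1.abs_apply_le_norm u x).trans (lt_add_one _).le))) (by positivity)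
  have hpointwise (x : α) : Tendsto (excess · x) (𝓝 u) (𝓝 0) := by
    have hexcess : Continuous (excess · x) := by
      have hx : Continuous fun v : H1 α => v x := H1.continuous_apply x
      exact (((((hcont x).comp hx).sub continuous_const).pow 2).sub
        (continuous_const.mul ((hx.sub continuous_const).pow 2))).max continuous_const
    simpa [excess] using hexcess.tendsto u
  have hsummable : Summable fun x => 8 * K ^ 2 * u x ^ 2 := (H1.hasSum_sq u).summable.mul_left _
  have htsum : Tendsto (fun v => ∑' x, excess v x) (𝓝 u) (𝓝 0) := by
    simpa using tendsto_tsum_of_dominated_convergence hsummable hpointwise hbound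
  have hnorm_sq : ∀ᶠ v in 𝓝 u, ‖nemytskii f hf v - nemytskii f hf u‖ ^ 2 ≤
      ∑' x, excess v x + 2 * K ^ 2 * ‖v - u‖ ^ 2 := by
    filter_upwards [hbound] with v hv
    have hexcess : Summable (excess v) := hsummable.of_norm_bounded hv
    refine hasSum_le (fun x => ?_) (H1.hasSum_sq _)
      (hexcess.hasSum.add ((H1.hasSum_sq (v - u)).mul_left (2 * K ^ 2)))
    exact sub_le_iff_le_add.1 (le_max_left _ _)
  have hsq : Tendsto (fun v => ‖nemytskii f hf v - nemytskii f hf u‖ ^ 2) (𝓝 u) (𝓝 0) := by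
    refine squeeze_zero' (.of_forall fun v => sq_nonneg _) hnorm_sq ?_
    have hdist : Tendsto (fun v => 2 * K ^ 2 * ‖v - u‖ ^ 2) (𝓝 u) (𝓝 0) :=
      Continuous.tendsto' (by fun_prop) _ _ (by simp)
    simpa using htsum.add hdist
  exact tendsto_iff_norm_sub_tendsto_zero.2 (by simpa using hsq.sqrt)

theorem exists_mem_uIcc_sub_eq_mul {g g' : ℝ → ℝ} (hg : ∀ t, HasDerivAt g (g' t) t) (a b : ℝ) :
    ∃ c ∈ Set.uIcc a b, g b - g a = g' c * (b - a) := by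
  obtain ⟨c, hc, hslope⟩ := domain_mvt (fun t _ => (hg t).hasFDerivAt.hasFDerivWithinAt)
    convex_univ (Set.mem_univ a) (Set.mem_univ b)
  refine ⟨c, by rwa [← segment_eq_uIcc], ?_⟩
  simpa [mul_comm] using hslope

theorem exists_hasSum_sub_inner_nemytskii (hf : HasLocalLinearGrowth f)
    (hF : ∀ x t, HasDerivAt (F x) (f x t) t) (u v : H1 α) :
    ∃ ξ : H1 α, ‖ξ - u‖ ≤ ‖v - u‖ ∧
      HasSum (fun x => F x (v x) - F x (u x)) ⟪nemytskii f hf ξ, v - u⟫ := by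
  choose c hc hslope using fun x => exists_mem_uIcc_sub_eq_mul (hF x) (u x) (v x)
  have hclose (x : α) : ‖c x - u x‖ ≤ ‖(v - u) x‖ := Set.abs_sub_left_of_mem_uIcc (hc x)
  have hmem : Memℓp c 2 := by
    rw [← sub_add_cancel c u]
    exact ((lp.memℓp (v - u)).mono' hclose).add (lp.memℓp u)
  refine ⟨⟨c, hmem⟩, lp.norm_mono two_ne_zero hclose, ?_⟩
  simp only [hslope]
  exact H1.hasSum_mul (nemytskii f hf ⟨c, hmem⟩) (v - u)

theorem summable_comp_of_hasDerivAt (hf : HasLocalLinearGrowth f)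
    (hF : ∀ x t, HasDerivAt (F x) (f x t) t) (hF₀ : ∀ x, F x 0 = 0) (u : H1 α) :
    Summable fun x => F x (u x) := by
  obtain ⟨ξ, -, hξ⟩ := exists_hasSum_sub_inner_nemytskii hf hF 0 u
  simpa [hF₀] using hξ.summable

theorem hasFDerivAt_tsum_comp (hf : HasLocalLinearGrowth f) (hcont : ∀ x, Continuous (f x))
    (hF : ∀ x t, HasDerivAt (F x) (f x t) t) (hF₀ : ∀ x, F x 0 = 0) (u : H1 α) :
    HasFDerivAt (fun v : H1 α => ∑' x, F x (v x)) (innerSL ℝ (nemytskii f hf u)) u := by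
  have hsum := summable_comp_of_hasDerivAt hf hF hF₀
  refine .of_isLittleO (isLittleO_iff.2 fun ε hε => ?_)
  obtain ⟨δ, hδ, hcont_u⟩ := Metric.continuousAt_iff.1
    (continuous_nemytskii hf hcont).continuousAt ε hε
  filter_upwards [Metric.ball_mem_nhds u hδ] with v hv
  obtain ⟨ξ, hξ, hhas⟩ := exists_hasSum_sub_inner_nemytskii hf hF u v
  have hclose : ‖nemytskii f hf ξ - nemytskii f hf u‖ ≤ ε := by
    rw [← dist_eq_norm] at hξ ⊢
    exact (hcont_u (hξ.trans_lt (by rwa [← dist_eq_norm]))).le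
  rw [innerSL_apply_apply, ← (hsum v).tsum_sub (hsum u), hhas.tsum_eq, ← inner_sub_left]
  exact (norm_inner_le_norm _ _).trans (by gcongr)

theorem hasDerivAt_of_eq_intervalIntegral {g G : ℝ → ℝ} (hg : Continuous g)
    (hG : ∀ t, G t = ∫ s in (0 : ℝ)..t, g s) (t : ℝ) : HasDerivAt G (g t) t := by
  rw [funext hG]
  exact intervalIntegral.integral_hasDerivAt_right (hg.intervalIntegrable _ _)
    (hg.stronglyMeasurableAtFilter _ _) hg.continuousAt

end Nemytskii

section SemilinearEnergy

variable {α H : Type*} [NormedAddCommGroup H] [InnerProductSpace ℝ H] {T : H1 α →L[ℝ] H}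
  {f F : α → ℝ → ℝ}

/-- The energy `½‖T u‖² - ∑ F(·, u)` of a semilinear variational problem whose quadratic part is
the norm pulled back along `T`. -/
noncomputable def semilinearEnergy (T : H1 α →L[ℝ] H) (F : α → ℝ → ℝ) (u : H1 α) : ℝ :=
  1 / 2 * ‖T u‖ ^ 2 - ∑' x, F x (u x)

theorem hasFDerivAt_semilinearEnergy (hf : HasLocalLinearGrowth f)
    (hcont : ∀ x, Continuous (f x)) (hF : ∀ x t, HasDerivAt (F x) (f x t) t)
    (hF₀ : ∀ x, F x 0 = 0) (u : H1 α) :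
    HasFDerivAt (semilinearEnergy T F)
      ((innerSL ℝ (T u)).comp T - innerSL ℝ (nemytskii f hf u)) u := by
  have hquad : HasFDerivAt (fun v => 1 / 2 * ‖T v‖ ^ 2) ((innerSL ℝ (T u)).comp T) u := by
    refine (T.hasFDerivAt.norm_sq.const_mul (1 / 2 : ℝ)).congr_fderiv ?_
    ext v
    simp
  exact hquad.sub (hasFDerivAt_tsum_comp hf hcont hF hF₀ u)

theorem contDiff_semilinearEnergy (hf : HasLocalLinearGrowth f) (hcont : ∀ x, Continuous (f x))
    (hF : ∀ x t, HasDerivAt (F x) (f x t) t) (hF₀ : ∀ x, F x 0 = 0) :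
    ContDiff ℝ 1 (semilinearEnergy T F) := by
  have hderiv := hasFDerivAt_semilinearEnergy (T := T) hf hcont hF hF₀
  refine contDiff_one_iff_fderiv.2 ⟨fun u => (hderiv u).differentiableAt, ?_⟩
  rw [funext fun u => (hderiv u).fderiv]
  exact (((innerSL ℝ).continuous.comp T.continuous).clm_comp continuous_const).sub
    ((innerSL ℝ).continuous.comp (continuous_nemytskii hf hcont))

theorem fderiv_semilinearEnergy_apply (hf : HasLocalLinearGrowth f)
    (hcont : ∀ x, Continuous (f x)) (hF : ∀ x t, HasDerivAt (F x) (f x t) t)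
    (hF₀ : ∀ x, F x 0 = 0) (u v : H1 α) :
    fderiv ℝ (semilinearEnergy T F) u v = ⟪T u, T v⟫ - ⟪nemytskii f hf u, v⟫ := by
  rw [(hasFDerivAt_semilinearEnergy hf hcont hF hF₀ u).fderiv]
  rfl

theorem monotoneOn_apply_mul_mul_div {g : ℝ → ℝ}
    (hneg : MonotoneOn (fun t => g t / |t|) (Set.Iio 0))
    (hpos : MonotoneOn (fun t => g t / |t|) (Set.Ioi 0)) (r : ℝ) :
    MonotoneOn (fun s => g (s * r) * r / s) (Set.Ioi 0) := by
  intro s hs t ht hst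
  rw [Set.mem_Ioi] at hs ht
  have hrewrite {s : ℝ} (hs : 0 < s) (hr : r ≠ 0) :
      g (s * r) * r / s = g (s * r) / |s * r| * (r * |r|) := by
    have := abs_pos.2 hr
    rw [abs_mul, abs_of_pos hs]
    field_simp
  rcases lt_trichotomy r 0 with hr | rfl | hr
  · simp only [hrewrite hs hr.ne, hrewrite ht hr.ne]
    exact mul_le_mul_of_nonpos_right
      (hneg (mul_neg_of_pos_of_neg ht hr) (mul_neg_of_pos_of_neg hs hr)
        (mul_le_mul_of_nonpos_right hst hr.le))
      (mul_nonpos_of_nonpos_of_nonneg hr.le (abs_nonneg r))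
  · simp
  · simp only [hrewrite hs hr.ne', hrewrite ht hr.ne']
    exact mul_le_mul_of_nonneg_right
      (hpos (mul_pos hs hr) (mul_pos ht hr) (mul_le_mul_of_nonneg_right hst hr.le))
      (mul_nonneg hr.le (abs_nonneg r))

theorem fiberSlopeAntitone_semilinearEnergy (hf : HasLocalLinearGrowth f)
    (hcont : ∀ x, Continuous (f x)) (hF : ∀ x t, HasDerivAt (F x) (f x t) t)
    (hF₀ : ∀ x, F x 0 = 0) (hneg : ∀ x, MonotoneOn (fun t => f x t / |t|) (Set.Iio 0))
    (hpos : ∀ x, MonotoneOn (fun t => f x t / |t|) (Set.Ioi 0)) :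
    FiberSlopeAntitone (semilinearEnergy T F) := by
  intro w s hs t ht hst
  have hslope {s : ℝ} (hs : 0 < s) : fderiv ℝ (semilinearEnergy T F) (s • w) w / s =
      ⟪T w, T w⟫ - ⟪nemytskii f hf (s • w), w⟫ / s := by
    rw [fderiv_semilinearEnergy_apply hf hcont hF hF₀, map_smul, real_inner_smul_left, sub_div,
      mul_div_cancel_left₀ _ hs.ne']
  simp only [hslope hs, hslope ht]
  refine sub_le_sub_left (hasSum_le (fun x => ?_)
    ((H1.hasSum_mul (nemytskii f hf (s • w)) w).div_const s)
    ((H1.hasSum_mul (nemytskii f hf (t • w)) w).div_const t)) _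
  exact monotoneOn_apply_mul_mul_div (hneg x) (hpos x) (w x) hs ht hst

theorem inner_nemytskii_le {ε δ : ℝ}
    (hsmall : ∀ x t, t ≠ 0 → |t| < δ → |f x t| ≤ ε * |t|) (hf : HasLocalLinearGrowth f)
    {u : H1 α} (hu : ‖u‖ < δ) : ⟪nemytskii f hf u, u⟫ ≤ ε * ‖u‖ ^ 2 := by
  refine hasSum_le (fun x => ?_) (H1.hasSum_mul _ u) ((H1.hasSum_sq u).mul_left ε)
  rcases eq_or_ne (u x) 0 with hx | hx
  · simp [hx]
  · calc f x (u x) * u x ≤ |f x (u x)| * |u x| := (le_abs_self _).trans (abs_mul _ _).le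
      _ ≤ ε * |u x| * |u x| := by
        gcongr
        exact hsmall x _ hx ((H1.abs_apply_le_norm u x).trans_lt hu)
      _ = ε * u x ^ 2 := by rw [mul_assoc, abs_mul_abs_self, sq]

theorem exists_pos_forall_le_norm_of_fderiv_apply_self_eq_zero (hf : HasLocalLinearGrowth f)
    (hcont : ∀ x, Continuous (f x)) (hF : ∀ x t, HasDerivAt (F x) (f x t) t)
    (hF₀ : ∀ x, F x 0 = 0)
    (hsmall : ∀ ε > 0, ∃ δ > 0, ∀ x t, t ≠ 0 → |t| < δ → |f x t| ≤ ε * |t|)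
    {c : ℝ} (hc : 0 < c) (hT : ∀ u, c * ‖u‖ ≤ ‖T u‖) :
    ∃ σ > 0, ∀ u : H1 α, u ≠ 0 → fderiv ℝ (semilinearEnergy T F) u u = 0 → σ ≤ ‖T u‖ := by
  obtain ⟨δ, hδ, hδ_small⟩ := hsmall (c ^ 2 / 2) (by positivity)
  refine ⟨c * δ, by positivity, fun u hu hΦu => ?_⟩
  by_contra! hlt
  have hnorm : ‖u‖ < δ := lt_of_mul_lt_mul_left ((hT u).trans_lt hlt) hc.le
  rw [fderiv_semilinearEnergy_apply hf hcont hF hF₀, real_inner_self_eq_norm_sq,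
    sub_eq_zero] at hΦu
  have hcoercive : (c * ‖u‖) ^ 2 ≤ c ^ 2 / 2 * ‖u‖ ^ 2 := calc
    (c * ‖u‖) ^ 2 ≤ ‖T u‖ ^ 2 := by gcongr; exact hT u
    _ ≤ c ^ 2 / 2 * ‖u‖ ^ 2 := hΦu.le.trans (inner_nemytskii_le hδ_small hf hnorm)
  have hpos : 0 < (c * ‖u‖) ^ 2 := by
    have := norm_pos_iff.2 hu
    positivity
  linarith [mul_pow c ‖u‖ 2]

end SemilinearEnergy

section Pullback

variable {α ι : Type*} {φ : ι → α} {D : ℕ}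

theorem sum_comp_le_of_encard_preimage_le (hφ : ∀ a, (φ ⁻¹' {a}).encard ≤ D) {g : α → ℝ}
    (hg : ∀ a, 0 ≤ g a) (hsum : Summable g) (s : Finset ι) :
    ∑ i ∈ s, g (φ i) ≤ D * ∑' a, g a := by
  classical
  have hcard (a : α) : #{i ∈ s | φ i = a} ≤ D := by
    have hsub : (({i ∈ s | φ i = a} : Finset ι) : Set ι) ⊆ φ ⁻¹' {a} :=
      fun i hi => (Finset.mem_filter.1 (Finset.mem_coe.1 hi)).2
    exact_mod_cast (Set.encard_coe_eq_coe_finsetCard _).symm.trans_le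
      ((Set.encard_le_encard hsub).trans (hφ a))
  calc ∑ i ∈ s, g (φ i) = ∑ a ∈ s.image φ, #{i ∈ s | φ i = a} • g a := Finset.sum_comp g φ
    _ ≤ ∑ a ∈ s.image φ, D * g a := by
      refine Finset.sum_le_sum fun a _ => ?_
      rw [nsmul_eq_mul]
      have := hg a
      gcongr
      exact hcard a
    _ ≤ D * ∑' a, g a := by
      rw [← Finset.mul_sum]
      have := hsum.sum_le_tsum (s.image φ) fun a _ => hg a
      gcongr

theorem sum_norm_rpow_comp_le (hφ : ∀ a, (φ ⁻¹' {a}).encard ≤ D) (u : H1 α) (s : Finset ι) :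
    ∑ i ∈ s, ‖u (φ i)‖ ^ (2 : ℝ≥0∞).toReal ≤ (√D * ‖u‖) ^ (2 : ℝ≥0∞).toReal := by
  have hsum := H1.hasSum_sq u
  simp only [ENNReal.toReal_ofNat, Real.rpow_ofNat, Real.norm_eq_abs, sq_abs, mul_pow,
    Real.sq_sqrt D.cast_nonneg, ← hsum.tsum_eq]
  exact sum_comp_le_of_encard_preimage_le hφ (fun a => sq_nonneg (u a)) hsum.summable s

/-- Composition with a map `φ` whose fibres have at most `D` elements, as an operator on `ℓ²`. -/
noncomputable def pullbackL (φ : ι → α) (hφ : ∀ a, (φ ⁻¹' {a}).encard ≤ D) :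
    H1 α →L[ℝ] H1 ι :=
  LinearMap.mkContinuous
    { toFun := fun u => ⟨fun i => u (φ i), memℓp_gen' (sum_norm_rpow_comp_le hφ u)⟩
      map_add' := fun _ _ => rfl
      map_smul' := fun _ _ => rfl } √D
    fun u => lp.norm_le_of_forall_sum_le (by norm_num) (by positivity)
      (sum_norm_rpow_comp_le hφ u)

end Pullback

section GraphEnergy

variable {α : Type*} {adj : α → α → Prop} {D : ℕ} {V : α → ℝ} {C₁ C₂ : ℝ}

/-- The oriented edges of the graph `adj`; each edge of the graph appears with both
orientations. -/
abbrev OrientedEdge (adj : α → α → Prop) : Type _ :=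
  Σ x, {y // adj x y}

theorem OrientedEdge.encard_preimage_source_le (hdeg : ∀ x, {y | adj x y}.encard ≤ D) (x : α) :
    ((fun e : OrientedEdge adj => e.1) ⁻¹' {x}).encard ≤ D := by
  refine le_trans (Set.encard_le_encard_of_injOn (f := fun e => (e.2 : α)) ?_ ?_) (hdeg x)
  · rintro ⟨_, y, hy⟩ rfl
    exact hy
  · rintro ⟨_, y, hy⟩ rfl ⟨_, z, hz⟩ h (rfl : y = z)
    cases h
    rfl

theorem OrientedEdge.encard_preimage_target_le (hsym : ∀ x y, adj x y → adj y x)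
    (hdeg : ∀ x, {y | adj x y}.encard ≤ D) (y : α) :
    ((fun e : OrientedEdge adj => (e.2 : α)) ⁻¹' {y}).encard ≤ D := by
  refine le_trans (Set.encard_le_encard_of_injOn (f := fun e => e.1) ?_ ?_) (hdeg y)
  · rintro ⟨x, _, hx⟩ rfl
    exact hsym _ _ hx
  · rintro ⟨x, _, hx⟩ rfl ⟨z, _, hz⟩ h (rfl : x = z)
    cases h
    rfl

/-- The discrete gradient `(x, y) ↦ (u y - u x) / √2`. The factor `√2` compensates for the two
orientations of each edge and makes `∑ |∇u|²` the square of the `ℓ²` norm. -/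
noncomputable def edgeGradient (hsym : ∀ x y, adj x y → adj y x)
    (hdeg : ∀ x, {y | adj x y}.encard ≤ D) : H1 α →L[ℝ] H1 (OrientedEdge adj) :=
  (√2)⁻¹ • (pullbackL _ (OrientedEdge.encard_preimage_target_le hsym hdeg) -
    pullbackL _ (OrientedEdge.encard_preimage_source_le hdeg))

theorem edgeGradient_apply (hsym : ∀ x y, adj x y → adj y x)
    (hdeg : ∀ x, {y | adj x y}.encard ≤ D) (u : H1 α) (e : OrientedEdge adj) :
    edgeGradient hsym hdeg u e = (√2)⁻¹ * (u e.2 - u e.1) :=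
  rfl

theorem hasSum_gammaProd (hsym : ∀ x y, adj x y → adj y x)
    (hdeg : ∀ x, {y | adj x y}.encard ≤ D) (u v : H1 α) :
    HasSum (gammaProd adj u v) ⟪edgeGradient hsym hdeg u, edgeGradient hsym hdeg v⟫ := by
  have hedge := H1.hasSum_mul (edgeGradient hsym hdeg u) (edgeGradient hsym hdeg v)
  have hsqrt : (√2 : ℝ)⁻¹ * (√2)⁻¹ = 1 / 2 := by
    rw [← mul_inv, Real.mul_self_sqrt zero_le_two, one_div]
  have hfiber (x : α) : gammaProd adj u v x =
      ∑' y, edgeGradient hsym hdeg u ⟨x, y⟩ * edgeGradient hsym hdeg v ⟨x, y⟩ := by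
    simp only [gammaProd, edgeGradient_apply, mul_mul_mul_comm, hsqrt, tsum_mul_left]
  refine hedge.sigma fun x => ?_
  rw [hfiber]
  exact (hedge.summable.sigma_factor x).hasSum

/-- Multiplication by `√V` on `ℓ²`, for a potential `V` bounded above. -/
noncomputable def sqrtPotential (hV : ∀ x, V x ≤ C₂) : H1 α →L[ℝ] H1 α :=
  lp.mapCLM 2 (fun x => ContinuousLinearMap.mul ℝ ℝ √(V x)) (Real.sqrt_nonneg C₂) fun x => by
    rw [ContinuousLinearMap.opNorm_mul_apply, Real.norm_of_nonneg (Real.sqrt_nonneg _)]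
    exact Real.sqrt_le_sqrt (hV x)

theorem hasSum_potential_mul_mul (hV₀ : ∀ x, 0 ≤ V x) (hV : ∀ x, V x ≤ C₂) (u v : H1 α) :
    HasSum (fun x => V x * u x * v x) ⟪sqrtPotential hV u, sqrtPotential hV v⟫ := by
  convert H1.hasSum_mul (sqrtPotential hV u) (sqrtPotential hV v) using 2 with x
  change _ = √(V x) * u x * (√(V x) * v x)
  rw [mul_mul_mul_comm, Real.mul_self_sqrt (hV₀ x), mul_assoc]

/-- The operator `u ↦ (∇u, √V u)` from `H¹` to `ℓ²(edges) × ℓ²(vertices)`, along which the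
`V`-inner product is a pulled back Hilbert space inner product. -/
noncomputable def energyOperator (hsym : ∀ x y, adj x y → adj y x)
    (hdeg : ∀ x, {y | adj x y}.encard ≤ D) (hV : ∀ x, V x ≤ C₂) :
    H1 α →L[ℝ] WithLp 2 (H1 (OrientedEdge adj) × H1 α) :=
  (WithLp.prodContinuousLinearEquiv 2 ℝ _ _).symm.toContinuousLinearMap.comp
    ((edgeGradient hsym hdeg).prod (sqrtPotential hV))

theorem inner_energyOperator (hsym : ∀ x y, adj x y → adj y x)
    (hdeg : ∀ x, {y | adj x y}.encard ≤ D) (hV₀ : ∀ x, 0 ≤ V x) (hV : ∀ x, V x ≤ C₂)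
    (u v : H1 α) :
    ⟪energyOperator hsym hdeg hV u, energyOperator hsym hdeg hV v⟫ = iprodH adj V u v :=
  (WithLp.prod_inner_apply _ _).trans
    ((hasSum_gammaProd hsym hdeg u v).add (hasSum_potential_mul_mul hV₀ hV u v)).tsum_eq.symm

theorem norm_sq_energyOperator (hsym : ∀ x y, adj x y → adj y x)
    (hdeg : ∀ x, {y | adj x y}.encard ≤ D) (hV₀ : ∀ x, 0 ≤ V x) (hV : ∀ x, V x ≤ C₂)
    (u : H1 α) :
    ‖energyOperator hsym hdeg hV u‖ ^ 2 = ∑' x, (gradSq adj u x + V x * u x ^ 2) := by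
  rw [← real_inner_self_eq_norm_sq, inner_energyOperator hsym hdeg hV₀ hV]
  simp only [iprodH, gradSq, sq, mul_assoc]

theorem norm_energyOperator (hsym : ∀ x y, adj x y → adj y x)
    (hdeg : ∀ x, {y | adj x y}.encard ≤ D) (hV₀ : ∀ x, 0 ≤ V x) (hV : ∀ x, V x ≤ C₂)
    (u : H1 α) : ‖energyOperator hsym hdeg hV u‖ = nrmH adj V u := by
  rw [nrmH, nrmV, ← norm_sq_energyOperator hsym hdeg hV₀ hV, Real.sqrt_sq (norm_nonneg _)]

theorem sqrt_mul_norm_le_norm_energyOperator (hsym : ∀ x y, adj x y → adj y x)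
    (hdeg : ∀ x, {y | adj x y}.encard ≤ D) (hC₁ : 0 ≤ C₁) (hV₁ : ∀ x, C₁ ≤ V x)
    (hV : ∀ x, V x ≤ C₂) (u : H1 α) : √C₁ * ‖u‖ ≤ ‖energyOperator hsym hdeg hV u‖ := by
  have hpotential : (√C₁ * ‖u‖) ^ 2 ≤ ‖sqrtPotential hV u‖ ^ 2 := by
    rw [mul_pow, Real.sq_sqrt hC₁, ← real_inner_self_eq_norm_sq (sqrtPotential hV u)]
    refine hasSum_le (fun x => ?_) ((H1.hasSum_sq u).mul_left C₁)
      (hasSum_potential_mul_mul (fun x => hC₁.trans (hV₁ x)) hV u u)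
    rw [mul_assoc, ← sq]
    exact mul_le_mul_of_nonneg_right (hV₁ x) (sq_nonneg _)
  have hnorm : ‖energyOperator hsym hdeg hV u‖ ^ 2 =
      ‖edgeGradient hsym hdeg u‖ ^ 2 + ‖sqrtPotential hV u‖ ^ 2 :=
    WithLp.prod_norm_sq_eq_of_L2 _
  refine le_of_sq_le_sq ?_ (norm_nonneg _)
  linarith [sq_nonneg ‖edgeGradient hsym hdeg u‖]

theorem PhiF_eq_semilinearEnergy (hsym : ∀ x y, adj x y → adj y x)
    (hdeg : ∀ x, {y | adj x y}.encard ≤ D) (hV₀ : ∀ x, 0 ≤ V x) (hV : ∀ x, V x ≤ C₂)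
    (F : α → ℝ → ℝ) :
    PhiF adj V F = semilinearEnergy (energyOperator hsym hdeg hV) F := by
  funext u
  rw [semilinearEnergy, norm_sq_energyOperator hsym hdeg hV₀ hV, PhiF]

end GraphEnergy

theorem stmt14_general {α : Type*} (adj : α → α → Prop) (D : ℕ)
    (hsym : ∀ x y, adj x y → adj y x) (hdeg : ∀ x, {y | adj x y}.encard ≤ D)
    (V : α → ℝ) (C₁ C₂ : ℝ) (hC₁ : 0 < C₁) (hV : ∀ x, C₁ ≤ V x ∧ V x ≤ C₂)
    (f : α → ℝ → ℝ) (hcont : ∀ x, Continuous (f x)) (hf : HasLocalLinearGrowth f)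
    (hsmall : ∀ ε > 0, ∃ δ > 0, ∀ x t, t ≠ 0 → |t| < δ → |f x t| ≤ ε * |t|)
    (hmono : ∀ x, MonotoneOn (fun t => f x t / |t|) (Set.Iio 0) ∧
      MonotoneOn (fun t => f x t / |t|) (Set.Ioi 0))
    (F : α → ℝ → ℝ) (hF : ∀ x t, F x t = ∫ s in (0 : ℝ)..t, f x s)
    (sw : H1 α → ℝ) (hsw : IsNehariScale (PhiF adj V F) sw) :
    (∀ w : ℕ → H1 α, (∀ n, nrmH adj V (w n) = 1) →
      IsTangentialPalaisSmale (fun v => PhiF adj V F (sw v • v)) (iprodH adj V) (nrmH adj V) w →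
      IsPalaisSmale (PhiF adj V F) (nrmH adj V) fun n => sw (w n) • w n) ∧
    (∀ u : ℕ → H1 α, (∀ n, u n ∈ Nehari adj V F) → (∃ C : ℝ, ∀ n, nrmH adj V (u n) ≤ C) →
      IsPalaisSmale (PhiF adj V F) (nrmH adj V) u →
      IsTangentialPalaisSmale (fun v => PhiF adj V F (sw v • v)) (iprodH adj V) (nrmH adj V)
        fun n => (nrmH adj V (u n))⁻¹ • u n) := by
  have hV₀ (x : α) : 0 ≤ V x := hC₁.le.trans (hV x).1
  let T := energyOperator hsym hdeg fun x => (hV x).2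
  have hΦ : PhiF adj V F = semilinearEnergy T F := PhiF_eq_semilinearEnergy hsym hdeg hV₀ _ F
  have hnorm : nrmH adj V = fun u => ‖T u‖ :=
    funext fun u => (norm_energyOperator hsym hdeg hV₀ _ u).symm
  have hinner : iprodH adj V = fun u v => ⟪T u, T v⟫ :=
    funext₂ fun u v => (inner_energyOperator hsym hdeg hV₀ _ u v).symm
  have hF' (x : α) (t : ℝ) := hasDerivAt_of_eq_intervalIntegral (hcont x) (hF x) t
  have hF₀ (x : α) : F x 0 = 0 := by rw [hF, intervalIntegral.integral_same]
  have hanti : FiberSlopeAntitone (PhiF adj V F) := hΦ ▸ fiberSlopeAntitone_semilinearEnergy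
    hf hcont hF' hF₀ (fun x => (hmono x).1) fun x => (hmono x).2
  have hsmooth : ContDiff ℝ 1 (PhiF adj V F) := hΦ ▸ contDiff_semilinearEnergy hf hcont hF' hF₀
  obtain ⟨σ, hσ, hlow⟩ := exists_pos_forall_le_norm_of_fderiv_apply_self_eq_zero hf hcont hF' hF₀
    hsmall (Real.sqrt_pos.2 hC₁) (sqrt_mul_norm_le_norm_energyOperator hsym hdeg hC₁.le
      (fun x => (hV x).1) fun x => (hV x).2)
  rw [← hΦ] at hlow
  rw [hnorm, hinner]
  refine ⟨fun w hw hPS => hsw.isPalaisSmale_smul (T := T.toLinearMap) hanti hsmooth hσ hlow hw hPS,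
    fun u hu ⟨C, hC⟩ hPS => ?_⟩
  have hu₀ (n : ℕ) : 0 < ‖T (u n)‖ := hσ.trans_le (hlow _ (hu n).1 (hu n).2)
  exact hsw.isTangentialPalaisSmale_inv_smul hanti hsmooth (fun n => (hu n).1)
    (fun n => (hu n).2) hu₀ hC hPS _

/-- Proposition 3.7 (i)-(ii): Palais-Smale sequences for `Ψ = Φ ∘ m` on `S` correspond to
Palais-Smale sequences for `Φ` (dual norms taken with respect to the `V`-norm; tangential
derivative for `Ψ`). -/
theorem stmt14
    {Vtx : Type*} (adj : Vtx → Vtx → Prop) (D : ℕ)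
    (hsym : ∀ x y, adj x y → adj y x)
    (hirr : ∀ x, ¬ adj x x)
    (hfin : ∀ x, {y | adj x y}.Finite)
    (hdeg : ∀ x, {y | adj x y}.ncard ≤ D)
    (Vp : Vtx → ℝ) (C1 C2 : ℝ) (hC1 : 0 < C1)
    (hVbd : ∀ x, C1 ≤ Vp x ∧ Vp x ≤ C2)
    (f : Vtx → ℝ → ℝ) (hcont : ∀ x, Continuous (f x))
    (a q : ℝ) (ha : 0 < a) (hq : 2 < q)
    (hgrowth : ∀ x t, |f x t| ≤ a * (|t| + |t| ^ (q - 1)))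
    (hsmall : ∀ ε > 0, ∃ δ > 0, ∀ x t, t ≠ 0 → |t| < δ → |f x t| ≤ ε * |t|)
    (hmono : ∀ x, StrictMonoOn (fun t => f x t / |t|) (Set.Iio 0) ∧
             StrictMonoOn (fun t => f x t / |t|) (Set.Ioi 0))
    (F : Vtx → ℝ → ℝ) (hF : ∀ x t, F x t = ∫ s in (0:ℝ)..t, f x s)
    (hsuper : ∀ M : ℝ, ∃ R > 0, ∀ x t, R ≤ |t| → M ≤ F x t / t ^ 2)
    (sw : H1 Vtx → ℝ)
    (hsw : ∀ w : H1 Vtx, w ≠ 0 → 0 < sw w ∧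
      fderiv ℝ (PhiF adj Vp F) (sw w • w) (sw w • w) = 0 ∧
      ∀ s : ℝ, 0 < s → fderiv ℝ (PhiF adj Vp F) (s • w) (s • w) = 0 → s = sw w)
    :
    (∀ w : ℕ → H1 Vtx, (∀ n, nrmH adj Vp (w n) = 1) →
      (∃ C : ℝ, ∀ n, |PhiF adj Vp F (sw (w n) • w n)| ≤ C) →
      (∀ ε > 0, ∃ n0 : ℕ, ∀ n ≥ n0, ∀ z : H1 Vtx, iprodH adj Vp (w n) z = 0 →
        |fderiv ℝ (fun v : H1 Vtx => PhiF adj Vp F (sw v • v)) (w n) z| ≤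
          ε * nrmH adj Vp z) →
      ((∃ C : ℝ, ∀ n, |PhiF adj Vp F (sw (w n) • w n)| ≤ C) ∧
        (∀ ε > 0, ∃ n0 : ℕ, ∀ n ≥ n0, ∀ z : H1 Vtx,
          |fderiv ℝ (PhiF adj Vp F) (sw (w n) • w n) z| ≤ ε * nrmH adj Vp z))) ∧
    (∀ u : ℕ → H1 Vtx, (∀ n, u n ∈ Nehari adj Vp F) →
      (∃ C : ℝ, ∀ n, nrmH adj Vp (u n) ≤ C) →
      (∃ C : ℝ, ∀ n, |PhiF adj Vp F (u n)| ≤ C) →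
      (∀ ε > 0, ∃ n0 : ℕ, ∀ n ≥ n0, ∀ z : H1 Vtx,
        |fderiv ℝ (PhiF adj Vp F) (u n) z| ≤ ε * nrmH adj Vp z) →
      ((∃ C : ℝ, ∀ n,
          |PhiF adj Vp F (sw ((nrmH adj Vp (u n))⁻¹ • u n) •
            ((nrmH adj Vp (u n))⁻¹ • u n))| ≤ C) ∧
        (∀ ε > 0, ∃ n0 : ℕ, ∀ n ≥ n0, ∀ z : H1 Vtx,
          iprodH adj Vp ((nrmH adj Vp (u n))⁻¹ • u n) z = 0 →
          |fderiv ℝ (fun v : H1 Vtx => PhiF adj Vp F (sw v • v))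
            ((nrmH adj Vp (u n))⁻¹ • u n) z| ≤ ε * nrmH adj Vp z))) := by
  have h := stmt14_general adj D hsym
    (fun x => Set.encard_le_coe_iff_finite_ncard_le.2 ⟨hfin x, hdeg x⟩) Vp C1 C2 hC1 hVbd f hcont
    (hasLocalLinearGrowth_of_abs_le ha.le hq.le hgrowth) hsmall
    (fun x => (hmono x).imp StrictMonoOn.monotoneOn StrictMonoOn.monotoneOn) F hF sw hsw
  exact ⟨fun w hw hb hd => h.1 w hw ⟨hb, hd⟩, fun u hu hC hb hd => h.2 u hu hC ⟨hb, hd⟩⟩
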